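/- arXiv:1402.3450 — 3 statements merged into one kernel-verified Lean document; each statement's English description precedes it below -/
import Mathlib

section
/- For every natural number k ≥ 2 and every η ≥ 0, the (1+η)-stretch of P_k-Flip games is at most k+1+kη: for every P_k-Flip game with clause size at most k and every two (1+η)-approximate pure Nash equilibria S and S' of the game, Φ(S') ≤ (k+1+kη)·Φ(S). -/
/-!
A clause satisfied at `S'` is either satisfied at `S`, which costs `Φ(S)` in total, or it is
unsatisfied at `S`. In the latter case its truth value differs between the two states, so it contains
a variable `j` with `S j ≠ S' j`, and `j` is a player because both states agree with the frozen values
(`exists_player_of_sat_ne`). By the flip property, all clauses through `j` that are unsatisfied at `S`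
become satisfied when `j` flips, so their weight is at most `u_j(S_{-j}) ≤ (1 + η) u_j(S)`
(`sum_unsat_le_util_flip`). Summing over the players and using that every clause is counted by at most
`k` of them, `∑ u_j(S) ≤ k Φ(S)` (`sum_util_le`), so the second kind of clause weighs at most
`k (1 + η) Φ(S)`.
-/

/-- A `P_k`-Flip game: boolean variables `V`, player-controlled variables `N ⊆ V`
(variables outside `N` are frozen), and clauses `C` with nonnegative weights,
at most `k` variables each, satisfaction predicates depending only on their own
variables, and the flip property: an unsatisfied clause becomes satisfied when
any one of its variables is flipped. -/
structure PkFlipGame (V C : Type) [Fintype V] [DecidableEq V] [Fintype C] (k : ℕ) where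
  /-- the player-controlled variables -/
  N : Finset V
  /-- frozen values for the variables outside `N` -/
  frozen : V → Bool
  /-- clause weights -/
  w : C → ℝ
  w_nonneg : ∀ c, 0 ≤ w c
  /-- the variables of each clause -/
  vars : C → Finset V
  vars_card_le : ∀ c, (vars c).card ≤ k
  /-- the satisfaction predicate of each clause -/
  sat : C → (V → Bool) → Bool
  sat_depends : ∀ c (S S' : V → Bool), (∀ v ∈ vars c, S v = S' v) → sat c S = sat c S'
  flip_sat : ∀ c (S : V → Bool) (j : V), j ∈ vars c → sat c S = false →
    sat c (Function.update S j (!S j)) = true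

variable {V C : Type} [Fintype V] [DecidableEq V] [Fintype C] {k : ℕ}

/-- The state obtained from `S` by flipping the value of variable `j`. -/
def flipVar (S : V → Bool) (j : V) : V → Bool := Function.update S j (!S j)

namespace PkFlipGame

/-- A state of the game: agrees with the frozen values outside `N`. -/
def IsState (G : PkFlipGame V C k) (S : V → Bool) : Prop :=
  ∀ v, v ∉ G.N → S v = G.frozen v

/-- Utility of player `j`: total weight of satisfied clauses containing `j`'s variable. -/
def util (G : PkFlipGame V C k) (j : V) (S : V → Bool) : ℝ :=
  ∑ c ∈ Finset.univ.filter (fun c => j ∈ G.vars c ∧ G.sat c S = true), G.w c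

/-- The potential: total weight of satisfied clauses. -/
def potential (G : PkFlipGame V C k) (S : V → Bool) : ℝ :=
  ∑ c ∈ Finset.univ.filter (fun c => G.sat c S = true), G.w c

/-- Maximum possible utility `U_j` of player `j`: total weight of clauses containing `j`. -/
def maxUtil (G : PkFlipGame V C k) (j : V) : ℝ :=
  ∑ c ∈ Finset.univ.filter (fun c => j ∈ G.vars c), G.w c

/-- The subgame potential `Φ_R`: total weight of satisfied clauses containing a
variable of some player in `R`. -/
def subPotential (G : PkFlipGame V C k) (R : Finset V) (S : V → Bool) : ℝ :=
  ∑ c ∈ Finset.univ.filter (fun c => G.sat c S = true ∧ ∃ j ∈ R, j ∈ G.vars c), G.w c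

/-- A `ρ`-approximate pure Nash equilibrium: a state where no player can increase
her utility by more than a factor `ρ` by flipping her variable. -/
def IsApproxEquilibrium (G : PkFlipGame V C k) (ρ : ℝ) (S : V → Bool) : Prop :=
  G.IsState S ∧ ∀ j ∈ G.N, G.util j (flipVar S j) ≤ ρ * G.util j S

/-- A pure Nash equilibrium: no player can strictly increase her utility. -/
def IsPNE (G : PkFlipGame V C k) (S : V → Bool) : Prop :=
  G.IsState S ∧ ∀ j ∈ G.N, G.util j (flipVar S j) ≤ G.util j S

theorem sum_util_le (G : PkFlipGame V C k) (S : V → Bool) :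
    ∑ j ∈ G.N, G.util j S ≤ (k : ℝ) * G.potential S := by
  simp only [util, potential, Finset.sum_filter, Finset.mul_sum]
  rw [Finset.sum_comm]
  refine Finset.sum_le_sum fun c _ => ?_
  by_cases hc : G.sat c S = true
  · simp only [hc, and_true, if_true]
    rw [← Finset.sum_filter, Finset.sum_const, nsmul_eq_mul]
    refine mul_le_mul_of_nonneg_right ?_ (G.w_nonneg c)
    have hsub : G.N.filter (fun j => j ∈ G.vars c) ⊆ G.vars c :=
      fun j hj => (Finset.mem_filter.mp hj).2
    exact_mod_cast (Finset.card_le_card hsub).trans (G.vars_card_le c)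
  · simp [hc]

theorem sum_unsat_le_util_flip (G : PkFlipGame V C k) (S : V → Bool) (j : V) :
    ∑ c ∈ Finset.univ.filter (fun c => j ∈ G.vars c ∧ G.sat c S = false), G.w c
      ≤ G.util j (flipVar S j) := by
  refine Finset.sum_le_sum_of_subset_of_nonneg (fun c hc => ?_) fun c _ _ => G.w_nonneg c
  obtain ⟨hj, hc⟩ := (Finset.mem_filter.mp hc).2
  exact Finset.mem_filter.mpr ⟨Finset.mem_univ c, hj, G.flip_sat c S j hj hc⟩

theorem exists_player_of_sat_ne (G : PkFlipGame V C k) {S S' : V → Bool}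
    (hS : G.IsState S) (hS' : G.IsState S') {c : C} (h : G.sat c S ≠ G.sat c S') :
    ∃ j ∈ G.N, j ∈ G.vars c := by
  by_contra! hno
  refine h (G.sat_depends c S S' fun v hv => ?_)
  have hvN : v ∉ G.N := fun hN => hno v hN hv
  rw [hS v hvN, hS' v hvN]

/-- The weight gained in passing from `S` to `S'` is charged to the players: every newly satisfied
clause is counted by at least one player among her clauses unsatisfied at `S`. -/
theorem potential_le_add_sum_unsat (G : PkFlipGame V C k) {S S' : V → Bool}
    (hS : G.IsState S) (hS' : G.IsState S') :
    G.potential S' ≤ G.potential S + ∑ j ∈ G.N,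
      ∑ c ∈ Finset.univ.filter (fun c => j ∈ G.vars c ∧ G.sat c S = false), G.w c := by
  simp only [potential, Finset.sum_filter]
  rw [Finset.sum_comm, ← Finset.sum_add_distrib]
  refine Finset.sum_le_sum fun c _ => ?_
  have hterm : ∀ j ∈ G.N, 0 ≤ if j ∈ G.vars c ∧ G.sat c S = false then G.w c else 0 := by
    intro j _
    split_ifs
    exacts [G.w_nonneg c, le_rfl]
  have hsum := Finset.sum_nonneg hterm
  have hw := G.w_nonneg c
  by_cases hc' : G.sat c S' = true
  · by_cases hc : G.sat c S = true
    · simp only [hc, hc', if_true] at hsum ⊢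
      linarith
    · have hcf : G.sat c S = false := by simpa using hc
      obtain ⟨j, hjN, hj⟩ := G.exists_player_of_sat_ne hS hS' (c := c) (by simp [hcf, hc'])
      have hle := Finset.single_le_sum hterm hjN
      simp only [hj, hcf, and_self, if_true] at hle
      simp only [hc', hcf, if_true, Bool.false_eq_true, if_false, zero_add]
      exact hle
  · rw [if_neg hc']
    have : (0 : ℝ) ≤ if G.sat c S = true then G.w c else 0 := by
      split_ifs
      exacts [hw, le_rfl]
    linarith

end PkFlipGame

/-- For every `k ≥ 2` and `η ≥ 0`, the `(1+η)`-stretch of `P_k`-Flip games is at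
most `k + 1 + kη`: for any two `(1+η)`-approximate pure Nash equilibria `S`, `S'`
of a `P_k`-Flip game, `Φ(S') ≤ (k + 1 + kη) · Φ(S)`. -/
theorem pkFlip_stretch {V C : Type} [Fintype V] [DecidableEq V] [Fintype C]
    (k : ℕ) (hk : 2 ≤ k) (η : ℝ) (hη : 0 ≤ η)
    (G : PkFlipGame V C k) (S S' : V → Bool)
    (hS : G.IsApproxEquilibrium (1 + η) S)
    (hS' : G.IsApproxEquilibrium (1 + η) S') :
    G.potential S' ≤ ((k : ℝ) + 1 + (k : ℝ) * η) * G.potential S := by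
  have hplayers : ∑ j ∈ G.N,
      ∑ c ∈ Finset.univ.filter (fun c => j ∈ G.vars c ∧ G.sat c S = false), G.w c
      ≤ (1 + η) * ∑ j ∈ G.N, G.util j S := by
    rw [Finset.mul_sum]
    exact Finset.sum_le_sum fun j hj => (G.sum_unsat_le_util_flip S j).trans (hS.2 j hj)
  have hgain := G.potential_le_add_sum_unsat hS.1 hS'.1
  have hcount := mul_le_mul_of_nonneg_left (G.sum_util_le S) (by linarith : 0 ≤ 1 + η)
  linarith
end

section
/- For every natural number k ≥ 3 and every η ≥ 0, the (1+η)-stretch of nae-(3,k)-Flip games is at most 2+kη: for every nae-(3,k)-Flip game and every two (1+η)-approximate pure Nash equilibria S and S' of the game, Φ(S') ≤ (2+kη)·Φ(S). -/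
variable {V C : Type} [Fintype V] [DecidableEq V] [Fintype C] {k : ℕ}

/-- Value of a literal `(v, neg)` under a state `S`: `S v`, negated if `neg`. -/
def litVal (S : V → Bool) (l : V × Bool) : Bool := xor (S l.1) l.2

/-- A `nae`-`(kbar, k)`-Flip game: a `P_k`-Flip game whose clauses are
not-all-equal clauses with at least `kbar` and at most `k` literals over
distinct variables; a clause is satisfied iff two of its literals differ. -/
structure NaeFlipGame (V C : Type) [Fintype V] [DecidableEq V] [Fintype C] (kbar k : ℕ)
    extends PkFlipGame V C k where
  /-- the list of literals of each clause -/
  lits : C → List (V × Bool)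
  lits_length_lb : ∀ c, kbar ≤ (lits c).length
  lits_length_ub : ∀ c, (lits c).length ≤ k
  lits_nodup : ∀ c, ((lits c).map Prod.fst).Nodup
  vars_eq : ∀ c, vars c = ((lits c).map Prod.fst).toFinset
  sat_iff : ∀ c (S : V → Bool), sat c S = true ↔
    ∃ l₁ ∈ lits c, ∃ l₂ ∈ lits c, litVal S l₁ ≠ litVal S l₂

open Finset

/-- The variables on which two assignments differ. -/
def diffVars {V : Type} [Fintype V] (S S' : V → Bool) : Finset V :=
  univ.filter (fun v => S v ≠ S' v)

namespace NaeFlipGame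

lemma litVal_flipVar_of_ne {V : Type} [DecidableEq V] (S : V → Bool) {j : V}
    {l : V × Bool} (h : l.1 ≠ j) : litVal (flipVar S j) l = litVal S l := by
  simp [litVal, flipVar, Function.update_of_ne h]

/-- If flipping `j` falsifies a clause, its literals other than that of `j` agree at `S`. -/
lemma litVal_eq_of_flip_unsat {V C : Type} [Fintype V] [DecidableEq V] [Fintype C]
    {kbar k : ℕ} (G : NaeFlipGame V C kbar k) (S : V → Bool) {c : C} {j : V}
    (h : G.sat c (flipVar S j) = false) {l₁ l₂ : V × Bool}
    (h₁ : l₁ ∈ G.lits c) (h₂ : l₂ ∈ G.lits c) (n₁ : l₁.1 ≠ j) (n₂ : l₂.1 ≠ j) :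
    litVal S l₁ = litVal S l₂ := by
  by_contra hne
  have : G.sat c (flipVar S j) = true := (G.sat_iff c _).2
    ⟨l₁, h₁, l₂, h₂, by rwa [litVal_flipVar_of_ne S n₁, litVal_flipVar_of_ne S n₂]⟩
  simp [h] at this

/-- A satisfied not-all-equal clause with at least three literals is falsified by flipping at
most one of its variables: given two such variables, any third literal would agree with all
literals, so the clause would already be unsatisfied. -/
lemma critical_unique {V C : Type} [Fintype V] [DecidableEq V] [Fintype C]
    {k : ℕ} (G : NaeFlipGame V C 3 k) (S : V → Bool) {c : C} (hs : G.sat c S = true)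
    {i j : V} (hi : G.sat c (flipVar S i) = false) (hj : G.sat c (flipVar S j) = false) :
    i = j := by
  by_contra hij
  have hcard : 3 ≤ (G.vars c).card := by
    rw [G.vars_eq, List.toFinset_card_of_nodup (G.lits_nodup c), List.length_map]
    exact G.lits_length_lb c
  obtain ⟨v, hv, hvn⟩ : ∃ v ∈ G.vars c, v ∉ ({i, j} : Finset V) :=
    exists_mem_notMem_of_card_lt_card (lt_of_le_of_lt card_le_two (by omega))
  simp only [mem_insert, mem_singleton, not_or] at hvn
  rw [G.vars_eq, List.mem_toFinset, List.mem_map] at hv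
  obtain ⟨m, hm, rfl⟩ := hv
  have key : ∀ l ∈ G.lits c, litVal S l = litVal S m := by
    intro l hl
    by_cases h : l.1 = i
    · exact G.litVal_eq_of_flip_unsat S hj hl hm (h ▸ hij) hvn.2
    · exact G.litVal_eq_of_flip_unsat S hi hl hm h hvn.1
  obtain ⟨l₁, h₁, l₂, h₂, hne⟩ := (G.sat_iff c S).1 hs
  exact hne ((key l₁ h₁).trans (key l₂ h₂).symm)

/-- The contribution of a single clause to the stretch bound. The two cardinalities are the
multiplicities with which the clause occurs in the sum over `j ∈ D` of the utilities of `j`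
before and after flipping `j`. -/
lemma clause_bound {V C : Type} [Fintype V] [DecidableEq V] [Fintype C]
    {k : ℕ} (G : NaeFlipGame V C 3 k) (S S' : V → Bool) {η : ℝ} (hη : 0 ≤ η) (c : C) :
    (if G.sat c S' = true then (1 : ℝ) else 0) +
      (1 + η) * ((diffVars S S').filter (fun j => j ∈ G.vars c ∧ G.sat c S = true)).card ≤
    (if G.sat c S = true then 2 + (k : ℝ) * η else 0) +
      ((diffVars S S').filter
        (fun j => j ∈ G.vars c ∧ G.sat c (flipVar S j) = true)).card := by
  set D := diffVars S S' with hD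
  by_cases hs : G.sat c S = true
  · have hb : (D.filter (fun j => j ∈ G.vars c)).card ≤ k :=
      (card_le_card fun j hj => (mem_filter.1 hj).2).trans (G.vars_card_le c)
    have ha : (D.filter (fun j => j ∈ G.vars c)).card ≤
        (D.filter (fun j => j ∈ G.vars c ∧ G.sat c (flipVar S j) = true)).card + 1 := by
      rw [← card_filter_add_card_filter_not (s := D.filter (fun j => j ∈ G.vars c))
        (fun j => G.sat c (flipVar S j) = true), filter_filter]
      gcongr
      refine card_le_one.2 fun i hi j hj => ?_
      simp only [mem_filter, Bool.not_eq_true] at hi hj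
      exact G.critical_unique S hs hi.2 hj.2
    have hb' : ((D.filter (fun j => j ∈ G.vars c)).card : ℝ) ≤ k := by exact_mod_cast hb
    have ha' : ((D.filter (fun j => j ∈ G.vars c)).card : ℝ) ≤
        (D.filter (fun j => j ∈ G.vars c ∧ G.sat c (flipVar S j) = true)).card + 1 := by
      exact_mod_cast ha
    have h1 : (if G.sat c S' = true then (1 : ℝ) else 0) ≤ 1 := by split_ifs <;> norm_num
    simp only [hs, and_true, if_true]
    nlinarith [mul_le_mul_of_nonneg_right hb' hη]
  · simp only [hs, and_false, filter_false, card_empty, Nat.cast_zero, mul_zero, add_zero,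
      if_false, zero_add, Bool.false_eq_true]
    by_cases hs' : G.sat c S' = true
    · obtain ⟨j, hj, hne⟩ : ∃ j ∈ G.vars c, S j ≠ S' j := by
        by_contra! h
        exact hs (by rw [G.sat_depends c S S' h, hs'])
      have hpos : 0 < (D.filter
          (fun j => j ∈ G.vars c ∧ G.sat c (flipVar S j) = true)).card :=
        card_pos.2 ⟨j, mem_filter.2 ⟨by simpa [hD, diffVars] using hne, hj,
          G.flip_sat c S j hj (by simpa using hs)⟩⟩
      rw [if_pos hs']
      exact_mod_cast hpos
    · rw [if_neg hs']
      positivity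

end NaeFlipGame

/-- Double counting: a sum over `j ∈ D` of weights of clauses related to `j` counts each clause
with the number of `j ∈ D` related to it. -/
lemma sum_sum_filter_eq {V C : Type} [Fintype C] (D : Finset V) (w : C → ℝ)
    (p : V → C → Prop) [∀ j c, Decidable (p j c)] :
    ∑ j ∈ D, ∑ c ∈ univ.filter (p j), w c =
      ∑ c, w c * ((D.filter (fun j => p j c)).card : ℝ) := by
  simp_rw [sum_filter]
  rw [sum_comm]
  refine sum_congr rfl fun c _ => ?_
  rw [← sum_filter, sum_const, nsmul_eq_mul, mul_comm]

/-- For every `k ≥ 3` and `η ≥ 0`, the `(1+η)`-stretch of `nae`-`(3,k)`-Flip games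
is at most `2 + kη`. -/
theorem nae3_stretch {V C : Type} [Fintype V] [DecidableEq V] [Fintype C]
    (k : ℕ) (hk : 3 ≤ k) (η : ℝ) (hη : 0 ≤ η)
    (G : NaeFlipGame V C 3 k) (S S' : V → Bool)
    (hS : G.toPkFlipGame.IsApproxEquilibrium (1 + η) S)
    (hS' : G.toPkFlipGame.IsApproxEquilibrium (1 + η) S') :
    G.toPkFlipGame.potential S' ≤ (2 + (k : ℝ) * η) * G.toPkFlipGame.potential S := by
  have hN : ∀ j ∈ diffVars S S', j ∈ G.N := by
    intro j hj
    by_contra h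
    exact (mem_filter.1 hj).2 ((hS.1 j h).trans (hS'.1 j h).symm)
  have hsum := sum_le_sum fun j hj => hS.2 j (hN j hj)
  rw [← mul_sum] at hsum
  simp only [PkFlipGame.util] at hsum
  rw [sum_sum_filter_eq _ _ (fun j c => j ∈ G.vars c ∧ G.sat c (flipVar S j) = true),
    sum_sum_filter_eq _ _ (fun j c => j ∈ G.vars c ∧ G.sat c S = true)] at hsum
  have hclause := sum_le_sum fun c (_ : c ∈ (univ : Finset C)) =>
    mul_le_mul_of_nonneg_left (G.clause_bound S S' hη c) (G.w_nonneg c)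
  simp only [mul_add, sum_add_distrib, mul_ite, mul_one, mul_zero, mul_left_comm _ (1 + η),
    ← mul_sum] at hclause
  simp only [PkFlipGame.potential, sum_filter, mul_sum, mul_ite, mul_zero]
  simp only [mul_comm (2 + (k : ℝ) * η), mul_add]
  linarith
end

section
/- There exists a constant C > 0 such that the following holds. For every P_k-Flip game G with n players, every state S_in of G, and every ε ∈ (0,1], there exists a sequence of states S_in = S_0, S_1, ..., S_T with T ≤ C·n^3·k^7/ε^4, where for each t < T the state S_{t+1} is obtained from S_t by flipping the variable of a single player j_t ∈ N with u_{j_t}(S_{t+1}) > u_{j_t}(S_t) (an improvement move), and S_T is a (k+1+ε)-approximate pure Nash equilibrium of G. -/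
variable {V C : Type} [Fintype V] [DecidableEq V] [Fintype C] {k : ℕ}

namespace PkFlipGame

/-! ### Weights and utilities -/

/-- Total weight of the clauses that contain a variable of `D`. -/
def totW (G : PkFlipGame V C k) (D : Finset V) : ℝ :=
  ∑ c ∈ Finset.univ.filter (fun c => ∃ j ∈ D, j ∈ G.vars c), G.w c

/-- Weight of the clauses satisfied at `S` that contain a variable of `R` but none of `Z`. -/
def coreW (G : PkFlipGame V C k) (R Z : Finset V) (S : V → Bool) : ℝ :=
  ∑ c ∈ Finset.univ.filter (fun c => G.sat c S = true ∧ (∃ j ∈ R, j ∈ G.vars c) ∧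
    ¬ ∃ j ∈ Z, j ∈ G.vars c), G.w c

lemma sat_flip_of_notMem (G : PkFlipGame V C k) (S : V → Bool) {j : V} {c : C}
    (h : j ∉ G.vars c) : G.sat c (flipVar S j) = G.sat c S := by
  apply G.sat_depends
  intro v hv
  have : v ≠ j := by rintro rfl; exact h hv
  simp [flipVar, this]

lemma sat_eq_of_agree (G : PkFlipGame V C k) {D : Finset V} {S S' : V → Bool}
    (h : ∀ v ∉ D, S' v = S v) {c : C} (hc : ¬ ∃ j ∈ D, j ∈ G.vars c) :
    G.sat c S' = G.sat c S := by
  apply G.sat_depends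
  intro v hv
  exact h v fun hD => hc ⟨v, hD, hv⟩

lemma util_nonneg (G : PkFlipGame V C k) (j : V) (S : V → Bool) : 0 ≤ G.util j S :=
  Finset.sum_nonneg fun c _ => G.w_nonneg c

lemma util_le_maxUtil (G : PkFlipGame V C k) (j : V) (S : V → Bool) :
    G.util j S ≤ G.maxUtil j := by
  apply Finset.sum_le_sum_of_subset_of_nonneg
  · intro c hc
    simp only [Finset.mem_filter] at hc ⊢
    tauto
  · intro c _ _
    exact G.w_nonneg c

lemma totW_nonneg (G : PkFlipGame V C k) (D : Finset V) : 0 ≤ G.totW D :=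
  Finset.sum_nonneg fun c _ => G.w_nonneg c

lemma coreW_nonneg (G : PkFlipGame V C k) (R Z : Finset V) (S : V → Bool) :
    0 ≤ G.coreW R Z S :=
  Finset.sum_nonneg fun c _ => G.w_nonneg c

lemma totW_empty (G : PkFlipGame V C k) : G.totW ∅ = 0 := by
  simp [totW]

lemma totW_union_le (G : PkFlipGame V C k) (R Z : Finset V) :
    G.totW (R ∪ Z) ≤ G.totW R + G.totW Z := by
  unfold totW
  simp only [Finset.sum_filter]
  rw [← Finset.sum_add_distrib]
  apply Finset.sum_le_sum
  intro c _
  have := G.w_nonneg c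
  by_cases h1 : ∃ j ∈ R, j ∈ G.vars c <;> by_cases h2 : ∃ j ∈ Z, j ∈ G.vars c <;>
    by_cases h3 : ∃ j ∈ R ∪ Z, j ∈ G.vars c <;> simp only [h1, h2, h3, if_true, if_false] <;>
    first | linarith | skip
  exfalso
  obtain ⟨j, hj, hc⟩ := h3
  rcases Finset.mem_union.1 hj with h | h
  · exact h1 ⟨j, h, hc⟩
  · exact h2 ⟨j, h, hc⟩

lemma totW_le_sum (G : PkFlipGame V C k) (D : Finset V) :
    G.totW D ≤ ∑ j ∈ D, G.maxUtil j := by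
  induction D using Finset.induction_on with
  | empty => simp [totW]
  | insert a D ha ih =>
    rw [Finset.sum_insert ha, Finset.insert_eq]
    refine (G.totW_union_le _ _).trans (add_le_add (le_of_eq ?_) ih)
    simp [totW, maxUtil]

/-- The total satisfied weight is an exact potential. -/
lemma potential_flip (G : PkFlipGame V C k) (S : V → Bool) (j : V) :
    G.potential (flipVar S j) - G.potential S = G.util j (flipVar S j) - G.util j S := by
  unfold potential util
  simp only [Finset.sum_filter]
  rw [← Finset.sum_sub_distrib, ← Finset.sum_sub_distrib]
  apply Finset.sum_congr rfl
  intro c _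
  by_cases h : j ∈ G.vars c
  · simp [h]
  · simp [h, G.sat_flip_of_notMem S h]

lemma maxUtil_le (G : PkFlipGame V C k) (S : V → Bool) (j : V) :
    G.maxUtil j ≤ G.util j S + G.util j (flipVar S j) := by
  unfold maxUtil util
  simp only [Finset.sum_filter]
  rw [← Finset.sum_add_distrib]
  apply Finset.sum_le_sum
  intro c _
  have := G.w_nonneg c
  by_cases h : j ∈ G.vars c
  · cases hs : G.sat c S
    · have := G.flip_sat c S j h hs
      simp [h, flipVar, this]
    · simp only [h, true_and, if_true]
      split_ifs <;> linarith
  · simp [h]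

lemma util_le_add_totW (G : PkFlipGame V C k) {D : Finset V} {S S' : V → Bool}
    (h : ∀ v ∉ D, S' v = S v) (j : V) : G.util j S' ≤ G.util j S + G.totW D := by
  unfold util totW
  simp only [Finset.sum_filter]
  rw [← Finset.sum_add_distrib]
  apply Finset.sum_le_sum
  intro c _
  have := G.w_nonneg c
  by_cases hc : ∃ j ∈ D, j ∈ G.vars c
  · simp only [hc, if_true]
    split_ifs <;> linarith
  · simp [hc, G.sat_eq_of_agree h hc]

/-- If no player of `R` can gain more than a factor `q` at `S`, then the satisfied weight around `R`
is at least a `1/(1+qk)` fraction of all the weight around `R`. -/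
lemma totW_le_of_q_eq (G : PkFlipGame V C k) {R Z : Finset V} {S : V → Bool} {q : ℝ} (hq : 0 ≤ q)
    (h : ∀ j ∈ R, G.util j (flipVar S j) ≤ q * G.util j S) :
    G.totW R ≤ (1 + q * k) * (G.coreW R Z S + G.totW Z) := by
  -- unsatisfied weight is counted at least once, and satisfied weight at most `k` times
  have h1 : G.totW R ≤ G.subPotential R S + ∑ j ∈ R, (G.maxUtil j - G.util j S) := by
    unfold totW subPotential maxUtil util
    simp only [Finset.sum_filter]
    simp_rw [← Finset.sum_sub_distrib]
    rw [Finset.sum_comm, ← Finset.sum_add_distrib]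
    apply Finset.sum_le_sum
    intro c _
    have hw := G.w_nonneg c
    have hnn : ∀ j ∈ R, 0 ≤ (if j ∈ G.vars c then G.w c else 0) -
        (if j ∈ G.vars c ∧ G.sat c S = true then G.w c else 0) := by
      intro j _
      by_cases hj : j ∈ G.vars c <;> cases hs : G.sat c S <;> simp [hj, hw]
    have hsum := Finset.sum_nonneg hnn
    by_cases hc : ∃ j ∈ R, j ∈ G.vars c
    · cases hs : G.sat c S
      · obtain ⟨j, hj, hjc⟩ := hc
        have := Finset.single_le_sum hnn hj
        simp only [hs, hjc, if_true] at this
        have hex : ∃ j ∈ R, j ∈ G.vars c := ⟨j, hj, hjc⟩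
        simpa [hex] using this
      · simp only [hs] at hsum
        simp only [hc, and_self, if_true]
        linarith
    · simp only [hc, if_false, and_false]
      linarith
  have h2 : ∑ j ∈ R, G.util j S ≤ k * G.subPotential R S := by
    unfold subPotential util
    simp only [Finset.sum_filter]
    rw [Finset.sum_comm, Finset.mul_sum]
    apply Finset.sum_le_sum
    intro c _
    have hw := G.w_nonneg c
    cases hs : G.sat c S
    · simp
    · simp only [and_true, true_and]
      rw [← Finset.sum_filter, Finset.sum_const, nsmul_eq_mul]
      by_cases hc : ∃ j ∈ R, j ∈ G.vars c
      · simp only [hc, if_true]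
        apply mul_le_mul_of_nonneg_right _ hw
        have : (R.filter (fun j => j ∈ G.vars c)).card ≤ (G.vars c).card := by
          apply Finset.card_le_card
          intro j hj
          exact (Finset.mem_filter.1 hj).2
        exact_mod_cast this.trans (G.vars_card_le c)
      · have : R.filter (fun j => j ∈ G.vars c) = ∅ := by
          apply Finset.filter_eq_empty_iff.2
          intro j hj hjc
          exact hc ⟨j, hj, hjc⟩
        simp [this, hc]
  have h3 : ∑ j ∈ R, (G.maxUtil j - G.util j S) ≤ q * ∑ j ∈ R, G.util j S := by
    rw [Finset.mul_sum]
    apply Finset.sum_le_sum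
    intro j hj
    have := G.maxUtil_le S j
    have := h j hj
    linarith
  have h4 : G.subPotential R S ≤ G.coreW R Z S + G.totW Z := by
    unfold subPotential coreW totW
    simp only [Finset.sum_filter]
    rw [← Finset.sum_add_distrib]
    apply Finset.sum_le_sum
    intro c _
    have hw := G.w_nonneg c
    by_cases hs : G.sat c S = true <;> by_cases h1 : ∃ j ∈ R, j ∈ G.vars c <;>
      by_cases h2 : ∃ j ∈ Z, j ∈ G.vars c <;> simp [hs, h1, h2, hw]
  have h5 := mul_le_mul_of_nonneg_left h2 hq
  have hk : (0 : ℝ) ≤ k := Nat.cast_nonneg k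
  have h6 := mul_le_mul_of_nonneg_left h4 (by positivity : 0 ≤ 1 + q * k)
  linarith

/-- Only clauses around `R ∪ Z` contribute to a potential difference. -/
lemma potential_sub_le (G : PkFlipGame V C k) {R Z : Finset V} {S S' : V → Bool}
    (h : ∀ v ∉ R ∪ Z, S' v = S v) :
    G.potential S' - G.potential S ≤ G.coreW R Z S' - G.coreW R Z S + G.totW Z := by
  unfold potential coreW totW
  simp only [Finset.sum_filter]
  rw [← Finset.sum_sub_distrib, ← Finset.sum_sub_distrib, ← Finset.sum_add_distrib]
  apply Finset.sum_le_sum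
  intro c _
  have hw := G.w_nonneg c
  by_cases h2 : ∃ j ∈ Z, j ∈ G.vars c
  · simp only [h2, if_true, not_true, and_false, if_false]
    split_ifs <;> linarith
  · by_cases h1 : ∃ j ∈ R, j ∈ G.vars c
    · simp [h1, h2]
    · have : G.sat c S' = G.sat c S := by
        apply G.sat_eq_of_agree h
        rintro ⟨j, hj, hc⟩
        rcases Finset.mem_union.1 hj with hh | hh
        · exact h1 ⟨j, hh, hc⟩
        · exact h2 ⟨j, hh, hc⟩
      simp [h1, h2, this]

lemma coreW_le_totW (G : PkFlipGame V C k) (R Z : Finset V) (S : V → Bool) :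
    G.coreW R Z S ≤ G.totW R := by
  apply Finset.sum_le_sum_of_subset_of_nonneg
  · intro c hc
    simp only [Finset.mem_filter] at hc ⊢
    tauto
  · intro c _ _
    exact G.w_nonneg c

lemma coreW_insert_flip (G : PkFlipGame V C k) (R Z : Finset V) (S : V → Bool) (j : V) :
    G.coreW (insert j R) Z (flipVar S j) ≤ G.coreW R Z S + G.util j (flipVar S j) := by
  unfold coreW util
  simp only [Finset.sum_filter]
  rw [← Finset.sum_add_distrib]
  apply Finset.sum_le_sum
  intro c _
  have hw := G.w_nonneg c
  by_cases hj : j ∈ G.vars c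
  · cases hs : G.sat c (flipVar S j)
    · simp only [Bool.false_eq_true, false_and, and_false, if_false]
      split_ifs <;> linarith
    · simp only [hj, true_and, if_true]
      split_ifs <;> linarith
  · simp only [hj, G.sat_flip_of_notMem S hj, Finset.exists_mem_insert, false_or, false_and,
      if_false, add_zero]
    exact le_rfl

lemma coreW_flip_of_mem (G : PkFlipGame V C k) (R Z : Finset V) (S : V → Bool) {j : V}
    (hj : j ∈ Z) : G.coreW R Z (flipVar S j) = G.coreW R Z S := by
  unfold coreW
  congr 1
  ext c
  simp only [Finset.mem_filter, Finset.mem_univ, true_and]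
  by_cases hc : j ∈ G.vars c
  · have : ∃ j ∈ Z, j ∈ G.vars c := ⟨j, hj, hc⟩
    simp [this]
  · rw [G.sat_flip_of_notMem S hc]

/-- The flip gains a factor above `q ≥ 1`, hence a fixed fraction of the maximum utility. -/
lemma gain_of_qmove (G : PkFlipGame V C k) {S : V → Bool} {j : V} {q : ℝ} (hq : 1 ≤ q)
    (h : q * G.util j S < G.util j (flipVar S j)) :
    (q - 1) * G.maxUtil j ≤
      (q + 1) * (G.potential (flipVar S j) - G.potential S) := by
  rw [G.potential_flip]
  have h1 := G.maxUtil_le S j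
  nlinarith [mul_le_mul_of_nonneg_left h1 (by linarith : 0 ≤ q - 1)]

/-! ### Sequences of improvement moves -/

/-- `Reach G m S S'`: `S'` is reached from `S` by exactly `m` improvement moves. -/
inductive Reach (G : PkFlipGame V C k) : ℕ → (V → Bool) → (V → Bool) → Prop
  | refl (S : V → Bool) : Reach G 0 S S
  | tail {m : ℕ} {S S' : V → Bool} (j : V) : Reach G m S S' → j ∈ G.N →
      G.util j S' < G.util j (flipVar S' j) → Reach G (m + 1) S (flipVar S' j)

lemma Reach.trans {G : PkFlipGame V C k} {m m' : ℕ} {S S' S'' : V → Bool}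
    (h : G.Reach m S S') (h' : G.Reach m' S' S'') : G.Reach (m + m') S S'' := by
  induction h' with
  | refl => exact h
  | tail j _ hj hu ih => exact .tail j (ih h) hj hu

lemma Reach.isState {G : PkFlipGame V C k} {m : ℕ} {S S' : V → Bool}
    (h : G.Reach m S S') (hS : G.IsState S) : G.IsState S' := by
  induction h with
  | refl => exact hS
  | tail j _ hj hu ih =>
    intro v hv
    have : v ≠ j := by rintro rfl; exact hv hj
    simpa [flipVar, this] using ih hS v hv

lemma Reach.exists_seq {G : PkFlipGame V C k} {m : ℕ} {S S' : V → Bool}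
    (h : G.Reach m S S') : ∃ Sq : ℕ → V → Bool, Sq 0 = S ∧ Sq m = S' ∧
      ∀ t < m, ∃ j ∈ G.N,
        Sq (t + 1) = flipVar (Sq t) j ∧ G.util j (Sq t) < G.util j (Sq (t + 1)) := by
  induction h with
  | refl S => exact ⟨fun _ => S, rfl, rfl, by simp⟩
  | @tail m S S' j _ hj hu ih =>
    obtain ⟨Sq, h0, hm, hs⟩ := ih
    refine ⟨fun t => if t ≤ m then Sq t else flipVar S' j, by simp [h0], by simp, ?_⟩
    intro t ht
    rcases Nat.lt_succ_iff_lt_or_eq.1 ht with h | rfl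
    · obtain ⟨i, hi, h1, h2⟩ := hs t h
      refine ⟨i, hi, ?_⟩
      simp only [h.le, Nat.succ_le_of_lt h, if_true]
      exact ⟨h1, h2⟩
    · refine ⟨j, hj, ?_⟩
      simp [hm, hu]

/-! ### A single phase -/

/-- The weight around the set `R` of players that made `p`-moves. The hypothesis `hgain` is what
those moves yield: the satisfied weight around `R` was gained, up to a factor `p/(p-1)`. -/
lemma totW_le_of_gain (G : PkFlipGame V C k) (hk : 2 ≤ k) {ε p q δ : ℝ} (hε : 0 < ε) (hε1 : ε ≤ 1)
    (hp : p = k + 1 + ε / 2) (hq : q = 1 + ε / (4 * k))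
    {R Z : Finset V} {S S' : V → Bool} (hδ : G.totW Z ≤ δ)
    (heq : ∀ j ∈ R, G.util j (flipVar S j) ≤ q * G.util j S)
    (hagree : ∀ v ∉ R ∪ Z, S' v = S v)
    (hgain : (p - 1) * G.coreW R Z S' ≤ p * (G.potential S' - G.potential S)) :
    G.totW R + δ ≤ 35 * k ^ 2 / ε * δ ∧
      G.potential S' - G.potential S ≤ 35 * k ^ 2 / ε * δ := by
  have hk' : (2 : ℝ) ≤ k := by exact_mod_cast hk
  have hqk : 1 + q * k = k + 1 + ε / 4 := by
    rw [hq]; field_simp; ring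
  have hq0 : 0 ≤ q := by rw [hq]; positivity
  have h1 := G.totW_le_of_q_eq (Z := Z) hq0 heq
  rw [hqk] at h1
  have h2 := G.potential_sub_le hagree
  have h3 := G.coreW_le_totW R Z S'
  have hF0 := G.coreW_nonneg R Z S
  have hZ := G.totW_nonneg Z
  have hδ0 : 0 ≤ δ := hZ.trans hδ
  have hp0 : 0 < p := by rw [hp]; positivity
  -- `p F(S) ≤ F(S') + p δ`
  have h4 : p * G.coreW R Z S ≤ G.totW R + p * δ := by
    nlinarith [mul_le_mul_of_nonneg_left h2 hp0.le, mul_le_mul_of_nonneg_left hδ hp0.le]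
  have h5 : G.totW R ≤ (k + 1 + ε / 4) * (G.coreW R Z S + δ) := by
    refine h1.trans ?_
    gcongr
  have h6 : ε / 4 * G.coreW R Z S ≤ 2 * p * δ := by
    have : p * G.coreW R Z S ≤ (k + 1 + ε / 4) * (G.coreW R Z S + δ) + p * δ := by linarith
    rw [hp] at this ⊢
    nlinarith [mul_nonneg hε.le hδ0]
  have hp2 : p ≤ 2 * k := by rw [hp]; linarith
  have h7 : ε * G.coreW R Z S ≤ 16 * k * δ := by
    nlinarith [mul_le_mul_of_nonneg_right hp2 hδ0]
  have h8 : ε * G.totW R ≤ 34 * k ^ 2 * δ := by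
    have e1 : G.totW R ≤ 2 * k * (G.coreW R Z S + δ) := by
      refine h5.trans ?_
      apply mul_le_mul_of_nonneg_right _ (by linarith)
      linarith
    have e2 : ε * (G.coreW R Z S + δ) ≤ 17 * k * δ := by
      nlinarith [mul_le_mul_of_nonneg_right (by linarith : ε ≤ k) hδ0]
    nlinarith [mul_le_mul_of_nonneg_left e1 hε.le,
      mul_le_mul_of_nonneg_left e2 (by linarith : (0 : ℝ) ≤ 2 * k)]
  have h9 : G.totW R + δ ≤ 35 * k ^ 2 / ε * δ := by
    rw [div_mul_eq_mul_div, le_div_iff₀ hε]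
    have : ε * δ ≤ k ^ 2 * δ := by
      apply mul_le_mul_of_nonneg_right _ hδ0
      nlinarith
    linarith
  exact ⟨h9, by linarith⟩

/-- One phase: players of `B` make `p`-moves and players of `B' ⊆ Z` make `q`-moves as long as
possible. Here `ℓ` is a lower bound on the maximum utilities of the moving players and `δ` an upper
bound on the weight around `Z`. -/
lemma phase (G : PkFlipGame V C k) (hk : 2 ≤ k) {ε p q δ ℓ : ℝ} (hε : 0 < ε) (hε1 : ε ≤ 1)
    (hp : p = k + 1 + ε / 2) (hq : q = 1 + ε / (4 * k))
    {B B' Z : Finset V} (hBN : B ⊆ G.N) (hZN : Z ⊆ G.N) (hB' : B' ⊆ Z)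
    {S : V → Bool} (hδ : G.totW Z ≤ δ) (hℓ : 0 < ℓ)
    (hB : ∀ j ∈ B, ℓ ≤ G.maxUtil j) (hB'ℓ : ∀ j ∈ B', ℓ ≤ G.maxUtil j)
    (heq : ∀ j ∈ B, G.util j (flipVar S j) ≤ q * G.util j S) :
    ∃ (m : ℕ) (S' : V → Bool) (D : Finset V), G.Reach m S S' ∧
      D ⊆ B ∧ (∀ v ∉ D ∪ Z, S' v = S v) ∧
      G.totW D + δ ≤ 35 * k ^ 2 / ε * δ ∧
      m * (ε / (12 * k) * ℓ) ≤ 35 * k ^ 2 / ε * δ ∧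
      (∀ j ∈ B, G.util j (flipVar S' j) ≤ p * G.util j S') ∧
      (∀ j ∈ B', G.util j (flipVar S' j) ≤ q * G.util j S') := by
  have hk' : (2 : ℝ) ≤ k := by exact_mod_cast hk
  have hqpos : 0 < ε / (4 * k) := by positivity
  have hq2 : ε / (4 * k) ≤ 1 := by
    rw [div_le_one (by positivity)]; linarith
  have hγ : 0 < ε / (12 * k) * ℓ := by positivity
  have hqp : q ≤ p := by rw [hp]; linarith
  -- every move gains at least `ε ℓ / (12 k)`
  have hmove : ∀ (j : V) (S' : V → Bool), ℓ ≤ G.maxUtil j →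
      q * G.util j S' < G.util j (flipVar S' j) →
      ε / (12 * k) * ℓ ≤ G.potential (flipVar S' j) - G.potential S' := by
    intro j S' hj h
    have h1 := G.gain_of_qmove (by linarith) h
    have e : ε / (12 * k) = (ε / (4 * k)) / 3 := by field_simp; norm_num
    have h2 := mul_le_mul_of_nonneg_left hj hqpos.le
    have hq1 : q - 1 = ε / (4 * k) := by rw [hq]; ring
    rw [hq1] at h1
    have hx : 0 < G.potential (flipVar S' j) - G.potential S' := by
      by_contra hcon
      push Not at hcon
      have : 0 < ε / (4 * k) * ℓ := by positivity
      nlinarith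
    rw [e]
    nlinarith
  -- the invariant kept along the phase, after `m` moves
  let P : ℕ → Prop := fun m => ∃ (S' : V → Bool) (D : Finset V), G.Reach m S S' ∧ D ⊆ B ∧
    (∀ v ∉ D ∪ Z, S' v = S v) ∧
    m * (ε / (12 * k) * ℓ) ≤ G.potential S' - G.potential S ∧
    (p - 1) * G.coreW D Z S' ≤ p * (G.potential S' - G.potential S)
  have hP0 : P 0 := ⟨S, ∅, .refl S, by simp, by simp, by simp, by simp [coreW]⟩
  have hbound : ∀ m, P m → m ≤ ⌊35 * k ^ 2 / ε * δ / (ε / (12 * k) * ℓ)⌋₊ := by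
    rintro m ⟨S', D, -, hD, hag, hm, hg⟩
    apply Nat.le_floor
    rw [le_div_iff₀ hγ]
    exact hm.trans
      (G.totW_le_of_gain hk hε hε1 hp hq hδ (fun j hj => heq j (hD hj)) hag hg).2
  obtain ⟨m, hmP, hmax⟩ : ∃ m, P m ∧ ¬ P (m + 1) := by
    by_contra hcon
    push Not at hcon
    have hall : ∀ m, P m := fun m => Nat.rec hP0 (fun m ih => hcon m ih) m
    exact Nat.not_succ_le_self _ (hbound _ (hall (_ + 1)))
  obtain ⟨S', D, hr, hD, hag, hm, hg⟩ := hmP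
  have hb := G.totW_le_of_gain hk hε hε1 hp hq hδ (fun j hj => heq j (hD hj)) hag hg
  refine ⟨m, S', D, hr, hD, hag, hb.1, hm.trans hb.2, ?_, ?_⟩
  · intro j hj
    by_contra hcon
    push Not at hcon
    have hu := G.util_nonneg j S'
    have hqm : q * G.util j S' < G.util j (flipVar S' j) :=
      (mul_le_mul_of_nonneg_right hqp hu).trans_lt hcon
    have himp : G.util j S' < G.util j (flipVar S' j) := by nlinarith
    have hgn := hmove j S' (hB j hj) hqm
    refine hmax ⟨flipVar S' j, insert j D, .tail j hr (hBN hj) himp, ?_, ?_, ?_, ?_⟩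
    · exact Finset.insert_subset hj hD
    · intro v hv
      simp only [Finset.mem_union, Finset.mem_insert, not_or] at hv
      have := hag v (by simp [hv])
      simpa [flipVar, hv.1.1] using this
    · push_cast
      linarith
    · have h1 := G.coreW_insert_flip D Z S' j
      have h2 := G.potential_flip S' j
      have hp1 : 0 ≤ p - 1 := by rw [hp]; linarith
      have h3 := mul_le_mul_of_nonneg_left h1 hp1
      have h4 : p * (G.potential (flipVar S' j) - G.potential S) =
          p * (G.potential S' - G.potential S) +
            p * (G.util j (flipVar S' j) - G.util j S') := by
        rw [← h2]; ring
      rw [h4]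
      linarith
  · intro j hj
    by_contra hcon
    push Not at hcon
    have hu := G.util_nonneg j S'
    have himp : G.util j S' < G.util j (flipVar S' j) := by nlinarith
    have hgn := hmove j S' (hB'ℓ j hj) hcon
    refine hmax ⟨flipVar S' j, D, .tail j hr (hZN (hB' hj)) himp, hD, ?_, ?_, ?_⟩
    · intro v hv
      have hne : v ≠ j := by
        rintro rfl
        exact hv (Finset.mem_union_right _ (hB' hj))
      simpa [flipVar, hne] using hag v hv
    · push_cast
      linarith
    · rw [G.coreW_flip_of_mem D Z S' (hB' hj)]
      have hp0 : 0 ≤ p := by rw [hp]; linarith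
      have : p * (G.potential S' - G.potential S) ≤
          p * (G.potential (flipVar S' j) - G.potential S) := by
        apply mul_le_mul_of_nonneg_left _ hp0
        linarith
      linarith

/-- A `p`-stable player stays `(k+1+ε)`-stable when the values changed touch little weight compared
with her maximum utility. -/
lemma stable_of_small_change (G : PkFlipGame V C k) (hk : 2 ≤ k) {ε p η : ℝ} (hε : 0 < ε)
    (hε1 : ε ≤ 1) (hp : p = k + 1 + ε / 2) {D : Finset V} {S S' : V → Bool} {j : V}
    (hag : ∀ v ∉ D, S' v = S v) (hD : G.totW D ≤ η)
    (hη : 18 * k ^ 2 * η ≤ ε * G.maxUtil j)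
    (hst : G.util j (flipVar S j) ≤ p * G.util j S) :
    G.util j (flipVar S' j) ≤ (k + 1 + ε) * G.util j S' := by
  have hk' : (2 : ℝ) ≤ k := by exact_mod_cast hk
  have h1 : G.util j (flipVar S' j) ≤ G.util j (flipVar S j) + G.totW D := by
    apply G.util_le_add_totW
    intro v hv
    by_cases h : v = j
    · subst h
      simp [flipVar, hag v hv]
    · simp [flipVar, h, hag v hv]
  have h2 : G.util j S ≤ G.util j S' + G.totW D :=
    G.util_le_add_totW (fun v hv => (hag v hv).symm) j
  have h3 := G.maxUtil_le S j
  have hη0 : 0 ≤ η := (G.totW_nonneg D).trans hD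
  have hu := G.util_nonneg j S
  -- `u ≥ U / (3k)`
  have h4 : G.maxUtil j ≤ 3 * k * G.util j S := by
    have : (1 + p) * G.util j S ≤ 3 * k * G.util j S := by
      apply mul_le_mul_of_nonneg_right _ hu
      rw [hp]; linarith
    linarith
  have h5 : 6 * k * η ≤ ε * G.util j S := by
    have e1 : k * (18 * k * η) ≤ k * (3 * ε * G.util j S) := by
      nlinarith [mul_le_mul_of_nonneg_left h4 hε.le]
    have := le_of_mul_le_mul_left e1 (by linarith : (0 : ℝ) < k)
    linarith
  have h6 : (k + 1 + ε) * (G.util j S - η) ≤ (k + 1 + ε) * G.util j S' := by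
    apply mul_le_mul_of_nonneg_left _ (by positivity)
    linarith
  have h7 : (k + 1 + ε) * η + η ≤ 3 * k * η := by
    have := mul_le_mul_of_nonneg_right (by linarith : (k : ℝ) + 1 + ε + 1 ≤ 3 * k) hη0
    linarith
  rw [hp] at hst
  linarith

/-! ### Gluing the phases -/

/-- All phases from `t` on. The finset `Pl` holds the players with positive maximum utility, `lvl`
is their level, and level `s` means a maximum utility in `(A y^(s+1), A y^s]`. The set `D`
contains all variables that change, and the bound on `G.totW D` is what keeps level `t - 1` stable. -/
lemma phases (G : PkFlipGame V C k) (hk : 2 ≤ k) {ε p q A y n : ℝ} (hε : 0 < ε) (hε1 : ε ≤ 1)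
    (hp : p = k + 1 + ε / 2) (hq : q = 1 + ε / (4 * k)) (hA : 0 < A) (hy : 0 < y)
    (hn : 0 < n) (hyn : y * (630 * n * k ^ 4) = ε ^ 2) (hy1 : y ≤ 1)
    {Pl : Finset V} (hPl : Pl ⊆ G.N) (hcard : (Pl.card : ℝ) ≤ n) {lvl : V → ℕ}
    (hlo : ∀ j ∈ Pl, A * y ^ (lvl j + 1) < G.maxUtil j)
    (hhi : ∀ j ∈ Pl, G.maxUtil j ≤ A * y ^ (lvl j)) (d : ℕ) :
    ∀ (t : ℕ) (S : V → Bool), (∀ j ∈ Pl, lvl j < t + d) →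
      (∀ j ∈ Pl, lvl j = t → G.util j (flipVar S j) ≤ q * G.util j S) →
      ∃ (m : ℕ) (S' : V → Bool) (D : Finset V), G.Reach m S S' ∧
        (m : ℝ) ≤ 264600 * n ^ 2 * k ^ 7 / ε ^ 4 *
          ((Pl.filter (fun j => t ≤ lvl j)).card + (Pl.filter (fun j => t + 1 ≤ lvl j)).card) ∧
        (∀ v ∈ D, v ∈ Pl ∧ t ≤ lvl v) ∧ (∀ v ∉ D, S' v = S v) ∧
        G.totW D ≤ 35 * k ^ 2 / ε * (n * (A * y ^ (t + 1))) ∧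
        ∀ j ∈ Pl, t ≤ lvl j → G.util j (flipVar S' j) ≤ (k + 1 + ε) * G.util j S' := by
  have hk' : (2 : ℝ) ≤ k := by exact_mod_cast hk
  induction d with
  | zero =>
    intro t S hlt _
    refine ⟨0, S, ∅, .refl S, ?_, by simp, by simp, ?_, ?_⟩
    · simp only [Nat.cast_zero]; positivity
    · rw [totW_empty]; positivity
    · intro j hj htj
      have := hlt j hj
      omega
  | succ d ih =>
    intro t S hlt hqeq
    set B := Pl.filter (fun j => lvl j = t) with hBdef
    set B' := Pl.filter (fun j => lvl j = t + 1) with hB'def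
    set Z := Pl.filter (fun j => t + 1 ≤ lvl j) with hZdef
    set δ := n * (A * y ^ (t + 1)) with hδdef
    have hδ : G.totW Z ≤ δ := by
      refine (G.totW_le_sum Z).trans ?_
      have h1 : ∑ j ∈ Z, G.maxUtil j ≤ ∑ j ∈ Z, A * y ^ (t + 1) := by
        apply Finset.sum_le_sum
        intro j hj
        obtain ⟨hj, hl⟩ := Finset.mem_filter.1 hj
        refine (hhi j hj).trans ?_
        exact mul_le_mul_of_nonneg_left (pow_le_pow_of_le_one hy.le hy1 hl) hA.le
      refine h1.trans ?_
      rw [Finset.sum_const, nsmul_eq_mul]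
      apply mul_le_mul_of_nonneg_right _ (by positivity)
      refine le_trans ?_ hcard
      exact_mod_cast Finset.card_filter_le _ _
    have hℓ : 0 < A * y ^ (t + 2) := by positivity
    have hlow : ∀ j ∈ Pl, lvl j ≤ t + 1 → A * y ^ (t + 2) ≤ G.maxUtil j := by
      intro j hj hl
      refine le_trans ?_ (hlo j hj).le
      exact mul_le_mul_of_nonneg_left
        (pow_le_pow_of_le_one hy.le hy1 (by omega)) hA.le
    set K := 264600 * n ^ 2 * (k : ℝ) ^ 7 / ε ^ 4 with hKdef
    have hK : 0 ≤ K := by positivity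
    obtain ⟨m, S₁, R, hr, hRB, hag, htot, hm, hpst, hqst⟩ :
        ∃ (m : ℕ) (S₁ : V → Bool) (R : Finset V), G.Reach m S S₁ ∧
          R ⊆ B ∧ (∀ v ∉ R ∪ Z, S₁ v = S v) ∧
          G.totW R + δ ≤ 35 * k ^ 2 / ε * δ ∧
          (m : ℝ) ≤ K * (B.card + B'.card) ∧
          (∀ j ∈ B, G.util j (flipVar S₁ j) ≤ p * G.util j S₁) ∧
          (∀ j ∈ B', G.util j (flipVar S₁ j) ≤ q * G.util j S₁) := by
      by_cases hemp : B = ∅ ∧ B' = ∅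
      · refine ⟨0, S, ∅, .refl S, by simp, by simp, ?_, ?_, by simp [hemp.1], by simp [hemp.2]⟩
        · rw [totW_empty, zero_add]
          have hδ0 : 0 ≤ δ := by positivity
          apply le_mul_of_one_le_left hδ0
          rw [one_le_div hε]
          nlinarith
        · simp only [Nat.cast_zero]; positivity
      · obtain ⟨m, S₁, R, hr, hRB, hag, htot, hm, hpst, hqst⟩ :=
          G.phase hk (B := B) (B' := B') (Z := Z) (S := S) hε hε1 hp hq
            ((Finset.filter_subset _ _).trans hPl) ((Finset.filter_subset _ _).trans hPl)
            (by
              intro j hj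
              simp only [hB'def, hZdef, Finset.mem_filter] at hj ⊢
              exact ⟨hj.1, hj.2.ge⟩)
            hδ hℓ
            (fun j hj => by
              simp only [hBdef, Finset.mem_filter] at hj
              exact hlow j hj.1 (by omega))
            (fun j hj => by
              simp only [hB'def, Finset.mem_filter] at hj
              exact hlow j hj.1 (by omega))
            (fun j hj => by
              simp only [hBdef, Finset.mem_filter] at hj
              exact hqeq j hj.1 hj.2)
        refine ⟨m, S₁, R, hr, hRB, hag, htot, ?_, hpst, hqst⟩
        have hone : (1 : ℝ) ≤ B.card + B'.card := by
          have : 1 ≤ B.card + B'.card := by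
            by_contra hcon
            apply hemp
            constructor <;> apply Finset.card_eq_zero.1 <;> omega
          exact_mod_cast this
        refine le_trans ?_ (le_mul_of_one_le_right hK hone)
        have hX : 0 < A * y ^ (t + 1) := by positivity
        have e1 : (A * y ^ (t + 1)) * (m * ε ^ 2 * y) ≤ (A * y ^ (t + 1)) * (420 * k ^ 3 * n) := by
          have := mul_le_mul_of_nonneg_left hm (by positivity : 0 ≤ 12 * k * ε)
          have l1 : 12 * k * ε * (m * (ε / (12 * k) * (A * y ^ (t + 2)))) =
              (A * y ^ (t + 1)) * (m * ε ^ 2 * y) := by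
            field_simp
            ring
          have l2 : 12 * k * ε * (35 * k ^ 2 / ε * δ) =
              (A * y ^ (t + 1)) * (420 * k ^ 3 * n) := by
            rw [hδdef]
            field_simp
            ring
          rwa [l1, l2] at this
        have e2 := le_of_mul_le_mul_left e1 hX
        rw [hKdef, le_div_iff₀ (by positivity)]
        have e3 := mul_le_mul_of_nonneg_right e2 (by positivity : 0 ≤ 630 * n * (k : ℝ) ^ 4)
        have l3 : m * ε ^ 2 * y * (630 * n * k ^ 4) = m * ε ^ 4 := by
          rw [mul_assoc, hyn]; ring
        rw [l3] at e3
        refine e3.trans (le_of_eq ?_)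
        ring
    obtain ⟨m₂, S₂, D, hr₂, hm₂, hDl, hag₂, htot₂, hst₂⟩ := ih (t + 1) S₁
      (fun j hj => by have := hlt j hj; omega)
      (fun j hj hl => hqst j (by simp [hB'def, hj, hl]))
    refine ⟨m + m₂, S₂, R ∪ Z, hr.trans hr₂, ?_, ?_, ?_, ?_, ?_⟩
    · have hsplit : ∀ s : ℕ, ((Pl.filter (fun j => s ≤ lvl j)).card : ℝ) =
          (Pl.filter (fun j => lvl j = s)).card + (Pl.filter (fun j => s + 1 ≤ lvl j)).card := by
        intro s
        rw [← Nat.cast_add, ← Finset.card_union_of_disjoint]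
        · congr 2
          ext j
          simp only [Finset.mem_filter, Finset.mem_union]
          constructor
          · rintro ⟨h, hs⟩
            rcases hs.eq_or_lt with h' | h'
            · exact .inl ⟨h, h'.symm⟩
            · exact .inr ⟨h, h'⟩
          · rintro (⟨h, h'⟩ | ⟨h, h'⟩)
            · exact ⟨h, h'.ge⟩
            · exact ⟨h, by omega⟩
        · rw [Finset.disjoint_left]
          intro j h1 h2
          simp only [Finset.mem_filter] at h1 h2
          omega
      have hs0 := hsplit t
      have hs1 := hsplit (t + 1)
      rw [← hBdef, ← hZdef] at hs0
      rw [← hB'def, ← hZdef] at hs1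
      rw [← hZdef] at hm₂
      push_cast
      rw [hs0]
      nth_rewrite 2 [hs1]
      linarith
    · intro v hv
      rcases Finset.mem_union.1 hv with h | h
      · have := Finset.mem_filter.1 (hRB h)
        exact ⟨this.1, this.2.ge⟩
      · have := Finset.mem_filter.1 h
        exact ⟨this.1, by omega⟩
    · intro v hv
      rw [← hag v hv]
      apply hag₂
      intro hvD
      apply hv
      have := hDl v hvD
      exact Finset.mem_union_right _ (Finset.mem_filter.2 this)
    · have := G.totW_union_le R Z
      linarith
    · intro j hj htj
      rcases htj.eq_or_lt with h | h
      · refine G.stable_of_small_change hk hε hε1 hp hag₂ htot₂ ?_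
          (hpst j (Finset.mem_filter.2 ⟨hj, h.symm⟩))
        have hU := hlo j hj
        rw [← h] at hU
        refine le_trans (le_of_eq ?_) (mul_le_mul_of_nonneg_left hU.le hε.le)
        have : 18 * k ^ 2 * (35 * k ^ 2 / ε * (n * (A * y ^ (t + 1 + 1)))) =
            (y * (630 * n * k ^ 4)) / ε * (A * y ^ (t + 1)) := by
          field_simp
          ring
        rw [this, hyn]
        field_simp
      · exact hst₂ j hj h

end PkFlipGame

/-- There is a universal constant `C > 0` such that in every `P_k`-Flip game
with `n` players, from every initial state there is a sequence of at most
`C·n³·k⁷/ε⁴` improvement moves ending at a `(k+1+ε)`-approximate pure Nash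
equilibrium, for every `ε ∈ (0,1]`. -/
theorem pkFlip_short_sequence :
    ∃ Cst : ℝ, 0 < Cst ∧
      ∀ (V C : Type) [Fintype V] [DecidableEq V] [Fintype C] (k : ℕ), 2 ≤ k →
        ∀ (G : PkFlipGame V C k) (Sin : V → Bool), G.IsState Sin →
          ∀ ε : ℝ, 0 < ε → ε ≤ 1 →
            ∃ (T : ℕ) (Sq : ℕ → V → Bool),
              (T : ℝ) ≤ Cst * (G.N.card : ℝ) ^ 3 * (k : ℝ) ^ 7 / ε ^ 4 ∧
              Sq 0 = Sin ∧
              (∀ t < T, ∃ j ∈ G.N,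
                Sq (t + 1) = flipVar (Sq t) j ∧ G.util j (Sq t) < G.util j (Sq (t + 1))) ∧
              G.IsApproxEquilibrium ((k : ℝ) + 1 + ε) (Sq T) := by
  refine ⟨529200, by norm_num, ?_⟩
  intro V C _ _ _ k hk G Sin hSin ε hε hε1
  have hk' : (2 : ℝ) ≤ k := by exact_mod_cast hk
  rcases Finset.eq_empty_or_nonempty G.N with hN | hN
  · exact ⟨0, fun _ => Sin, by simp [hN], rfl, by simp, hSin, by simp [hN]⟩
  set n : ℝ := (G.N.card : ℝ) with hndef
  have hn1 : (1 : ℝ) ≤ n := by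
    have := hN.card_pos
    rw [hndef]
    exact_mod_cast this
  set y : ℝ := ε ^ 2 / (630 * n * k ^ 4) with hydef
  have hden : 0 < 630 * n * (k : ℝ) ^ 4 := by positivity
  have hy : 0 < y := by positivity
  have hyn : y * (630 * n * k ^ 4) = ε ^ 2 := div_mul_cancel₀ _ hden.ne'
  have hy1 : y < 1 := by
    rw [hydef, div_lt_one hden]
    have h1 : ε ^ 2 ≤ 1 := pow_le_one₀ hε.le hε1
    have h2 : (1 : ℝ) ≤ k ^ 4 := one_le_pow₀ (by linarith)
    nlinarith
  have hU0 : ∀ j, 0 ≤ G.maxUtil j := fun j => (G.util_nonneg j Sin).trans (G.util_le_maxUtil j Sin)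
  -- all maximum utilities are at most `A y`, so that level `0` is empty
  set A : ℝ := (∑ j ∈ G.N, G.maxUtil j + 1) / y with hAdef
  have hsum0 : 0 ≤ ∑ j ∈ G.N, G.maxUtil j := Finset.sum_nonneg fun j _ => hU0 j
  have hA : 0 < A := by positivity
  have hAy : A * y = ∑ j ∈ G.N, G.maxUtil j + 1 := div_mul_cancel₀ _ hy.ne'
  set Pl := G.N.filter (fun j => 0 < G.maxUtil j) with hPldef
  have hle : ∀ j ∈ Pl, G.maxUtil j / A ≤ y := by
    intro j hj
    rw [div_le_iff₀ hA, mul_comm, hAy]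
    have := Finset.single_le_sum (fun j _ => hU0 j) (Finset.mem_filter.1 hj).1
    linarith
  have hex : ∀ j, ∃ l : ℕ, j ∈ Pl → y ^ (l + 1) < G.maxUtil j / A ∧ G.maxUtil j / A ≤ y ^ l := by
    intro j
    by_cases hj : j ∈ Pl
    · obtain ⟨l, hl⟩ := exists_nat_pow_near_of_lt_one
        (div_pos (Finset.mem_filter.1 hj).2 hA) ((hle j hj).trans hy1.le) hy hy1
      exact ⟨l, fun _ => hl⟩
    · exact ⟨0, fun h => absurd h hj⟩
  choose lvl hlvl using hex
  have hlo : ∀ j ∈ Pl, A * y ^ (lvl j + 1) < G.maxUtil j := by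
    intro j hj
    have := (hlvl j hj).1
    rwa [lt_div_iff₀ hA, mul_comm] at this
  have hhi : ∀ j ∈ Pl, G.maxUtil j ≤ A * y ^ (lvl j) := by
    intro j hj
    have := (hlvl j hj).2
    rwa [div_le_iff₀ hA, mul_comm] at this
  have hcard : (Pl.card : ℝ) ≤ n := by
    rw [hndef]
    exact_mod_cast Finset.card_filter_le _ _
  obtain ⟨m, S', D, hr, hm, -, -, -, hst⟩ := G.phases hk (Pl := Pl) hε hε1 rfl rfl hA hy
    (by linarith : 0 < n) hyn hy1.le (Finset.filter_subset _ _) hcard hlo hhi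
    (Pl.sup lvl + 1) 0 Sin
    (fun j hj => by have := Finset.le_sup (f := lvl) hj; omega)
    (fun j hj h0 => by
      exfalso
      have h1 := (hlvl j hj).1.trans_le (hle j hj)
      rw [h0] at h1
      simp at h1)
  obtain ⟨Sq, h0, hmS, hsteps⟩ := hr.exists_seq
  refine ⟨m, Sq, ?_, h0, hsteps, ?_⟩
  · refine hm.trans ?_
    have hc : ∀ s : ℕ, ((Pl.filter (fun j => s ≤ lvl j)).card : ℝ) ≤ n := by
      intro s
      refine le_trans ?_ hcard
      exact_mod_cast Finset.card_filter_le _ _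
    have h2n := add_le_add (hc 0) (hc (0 + 1))
    have hK : 0 ≤ 264600 * n ^ 2 * (k : ℝ) ^ 7 / ε ^ 4 := by positivity
    refine (mul_le_mul_of_nonneg_left h2n hK).trans (le_of_eq ?_)
    ring
  · rw [hmS]
    refine ⟨hr.isState hSin, ?_⟩
    intro j hj
    by_cases hpos : 0 < G.maxUtil j
    · exact hst j (Finset.mem_filter.2 ⟨hj, hpos⟩) (Nat.zero_le _)
    · have h1 := G.util_le_maxUtil j (flipVar S' j)
      have h2 := G.util_nonneg j S'
      have h3 : 0 ≤ ((k : ℝ) + 1 + ε) * G.util j S' := by positivity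
      linarith
end
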